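/- The space of alternal rational-valued moulds M in the variables v_i such that Δ_v·M is polynomial-valued in every depth is closed under the ari bracket; i.e. it forms a Lie algebra under ari. -/

import Mathlib

/-- A mould over ℚ: its depth-r component is its restriction to lists of length r
(a function of r commuting variables, identified with the corresponding ℚ-valued function). -/
abbrev Mould := List ℚ → ℚ

/-- The concatenation product of moulds:
μ(A,B)(u₁,…,u_r) = Σ_{i=0}^r A(u₁,…,u_i)·B(u_{i+1},…,u_r). -/
def muM (A B : Mould) : Mould := fun w =>
  ∑ i ∈ Finset.range (w.length + 1), A (w.take i) * B (w.drop i)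

/-- lu(A,B) = μ(A,B) - μ(B,A). -/
def luM (A B : Mould) : Mould := fun w => muM A B w - muM B A w

/-- The list of all shuffles of two lists. -/
def shuffles : List ℚ → List ℚ → List (List ℚ)
  | [], ys => [ys]
  | x :: xs, [] => [x :: xs]
  | x :: xs, y :: ys =>
      ((shuffles xs (y :: ys)).map (x :: ·)) ++ ((shuffles (x :: xs) ys).map (y :: ·))

/-- Δ_v(v₁,…,v_r) = v₁(v₁-v₂)(v₂-v₃)⋯(v_{r-1}-v_r)v_r (equal to 1 in depth 0). -/
def deltaV (w : List ℚ) : ℚ :=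
  w.headD 1 * w.getLastD 1 * (List.zipWith (fun a b => a - b) w w.tail).prod

/-- A generic point: pairwise distinct, nonzero coordinates (so that Δ_v is nonzero at the
point and at all its permutations); identities of rational functions are equivalent to their
pointwise validity at such points. -/
def GoodV (w : List ℚ) : Prop := w.Nodup ∧ (0 : ℚ) ∉ w

/-- Evaluation of a family of polynomials (one in each depth) at a point, in the matching
depth: this encodes a polynomial-valued mould. -/
noncomputable def evalP (p : (r : ℕ) → MvPolynomial (Fin r) ℚ) (w : List ℚ) : ℚ :=
  MvPolynomial.aeval w.get (p w.length)

/-- arit(B)·A for moulds in the variables v_i: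
(arit(B)·A)(v₁,…,v_r) = Σ_{0≤k<ℓ<r} A(a c) B(b⌋) - Σ_{1≤k<ℓ≤r} A(a c) B(⌊b),
where a = (v₁,…,v_k), b = (v_{k+1},…,v_ℓ), c = (v_{ℓ+1},…,v_r),
b⌋ subtracts v_{ℓ+1} from every entry of b, and ⌊b subtracts v_k. -/
def aritV (B A : Mould) : Mould := fun w =>
  (∑ k ∈ Finset.range (w.length + 1), ∑ l ∈ Finset.range (w.length + 1),
    if k < l ∧ l < w.length then
      A (w.take k ++ w.drop l) * B (((w.take l).drop k).map (fun x => x - w.getD l 0))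
    else 0)
  - (∑ k ∈ Finset.range (w.length + 1), ∑ l ∈ Finset.range (w.length + 1),
    if 1 ≤ k ∧ k < l ∧ l ≤ w.length then
      A (w.take k ++ w.drop l) * B (((w.take l).drop k).map (fun x => x - w.getD (k - 1) 0))
    else 0)

/-- The ari bracket (v-variable version): ari(A,B) = arit(B)·A - arit(A)·B + lu(A,B). -/
def ariV (A B : Mould) : Mould := fun w => aritV B A w - aritV A B w + luM A B w

/-- The sum of a mould over all shuffles of two words. -/
def shSum (f : Mould) (u v : List ℚ) : ℚ := ((shuffles u v).map f).sum

/-- The sum of a function of two words over all deconcatenations of a word. -/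
def decon (F : List ℚ → List ℚ → ℚ) (w : List ℚ) : ℚ :=
  ∑ i ∈ Finset.range (w.length + 1), F (w.take i) (w.drop i)

/-- Splitting off the first letter of a word, with value `0` on the empty word. -/
def onHead (H : ℚ → List ℚ → ℚ) : List ℚ → ℚ
  | [] => 0
  | x :: c => H x c

theorem shSum_nil_left (f : Mould) (v : List ℚ) : shSum f [] v = f v := by
  simp [shSum, shuffles]

theorem shSum_nil_right (f : Mould) (u : List ℚ) : shSum f u [] = f u := by
  cases u <;> simp [shSum, shuffles]

theorem shSum_cons_cons (f : Mould) (x y : ℚ) (u v : List ℚ) :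
    shSum f (x :: u) (y :: v) =
      shSum (fun w => f (x :: w)) u (y :: v) + shSum (fun w => f (y :: w)) (x :: u) v := by
  simp [shSum, shuffles, Function.comp_def]

theorem shSum_add (f g : Mould) (u v : List ℚ) :
    shSum (fun w => f w + g w) u v = shSum f u v + shSum g u v := by
  simp [shSum, List.sum_map_add]

theorem shSum_sub (f g : Mould) (u v : List ℚ) :
    shSum (fun w => f w - g w) u v = shSum f u v - shSum g u v := by
  rw [eq_sub_iff_add_eq, ← shSum_add]
  simp

theorem shSum_zero (u v : List ℚ) : shSum (fun _ => 0) u v = 0 := by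
  simp [shSum]

theorem shSum_mul_left (t : ℚ) (f : Mould) (u v : List ℚ) :
    shSum (fun w => t * f w) u v = t * shSum f u v := by
  simp [shSum, List.sum_map_mul_left]

theorem shSum_mul_right (t : ℚ) (f : Mould) (u v : List ℚ) :
    shSum (fun w => f w * t) u v = shSum f u v * t := by
  simp [shSum, List.sum_map_mul_right]

theorem shSum_sum {ι : Type*} (s : Finset ι) (f : ι → Mould) (u v : List ℚ) :
    shSum (fun w => ∑ i ∈ s, f i w) u v = ∑ i ∈ s, shSum (f i) u v := by
  classical
  induction s using Finset.induction_on with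
  | empty => simp [shSum_zero]
  | insert i s hi ih => simp [Finset.sum_insert hi, shSum_add, ih]

theorem shSum_decon_comm (G : List ℚ → List ℚ → List ℚ → ℚ) (w u v : List ℚ) :
    shSum (fun a => decon (G a) w) u v = decon (fun b c => shSum (fun a => G a b c) u v) w :=
  shSum_sum _ _ _ _

theorem shSum_onHead_comm (H : List ℚ → ℚ → List ℚ → ℚ) (w u v : List ℚ) :
    shSum (fun a => onHead (H a) w) u v = onHead (fun x c => shSum (fun a => H a x c) u v) w := by
  cases w <;> simp [onHead, shSum_zero]

theorem shSum_comm (f : Mould) (u v : List ℚ) : shSum f u v = shSum f v u := by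
  induction u generalizing f v with
  | nil => rw [shSum_nil_left, shSum_nil_right]
  | cons x u ihu =>
    induction v generalizing f with
    | nil => rw [shSum_nil_left, shSum_nil_right]
    | cons y v ihv => rw [shSum_cons_cons, shSum_cons_cons, ihu, ihv, add_comm]

theorem shSum_map (f : Mould) (g : ℚ → ℚ) (u v : List ℚ) :
    shSum (fun w => f (w.map g)) u v = shSum f (u.map g) (v.map g) := by
  induction u generalizing f v with
  | nil => simp [shSum_nil_left]
  | cons x u ihu =>
    induction v generalizing f with
    | nil => simp [shSum_nil_right]
    | cons y v ihv =>
      have h₁ := ihu (fun w => f (g x :: w)) (y :: v)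
      have h₂ := ihv (fun w => f (g y :: w))
      simp only [shSum_cons_cons, List.map_cons] at *
      rw [h₁, h₂]

theorem decon_nil (F : List ℚ → List ℚ → ℚ) : decon F [] = F [] [] := by simp [decon]

theorem decon_cons (F : List ℚ → List ℚ → ℚ) (x : ℚ) (w : List ℚ) :
    decon F (x :: w) = F [] (x :: w) + decon (fun a b => F (x :: a) b) w := by
  rw [decon, List.length_cons, Finset.sum_range_succ', add_comm]
  simp [decon]

theorem decon_add (F G : List ℚ → List ℚ → ℚ) (w : List ℚ) :
    decon (fun a b => F a b + G a b) w = decon F w + decon G w := Finset.sum_add_distrib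

theorem decon_mul_left (t : ℚ) (F : List ℚ → List ℚ → ℚ) (w : List ℚ) :
    decon (fun a b => t * F a b) w = t * decon F w := by
  simp [decon, Finset.mul_sum]

theorem decon_zero (w : List ℚ) : decon (fun _ _ => 0) w = 0 := by simp [decon]

theorem decon_comm (F : List ℚ → List ℚ → List ℚ → List ℚ → ℚ) (u v : List ℚ) :
    decon (fun a b => decon (F a b) v) u = decon (fun c d => decon (fun a b => F a b c d) u) v :=
  Finset.sum_comm

theorem decon_onHead_comm (H : List ℚ → List ℚ → ℚ → List ℚ → ℚ) (u w : List ℚ) :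
    decon (fun a b => onHead (H a b) w) u =
      onHead (fun x c => decon (fun a b => H a b x c) u) w := by
  cases w <;> simp [onHead, decon_zero]

theorem onHead_add (H K : ℚ → List ℚ → ℚ) (w : List ℚ) :
    onHead (fun x c => H x c + K x c) w = onHead H w + onHead K w := by
  cases w <;> simp [onHead]

theorem onHead_mul_left (t : ℚ) (H : ℚ → List ℚ → ℚ) (w : List ℚ) :
    onHead (fun x c => t * H x c) w = t * onHead H w := by
  cases w <;> simp [onHead]

theorem onHead_zero (w : List ℚ) : onHead (fun _ _ => 0) w = 0 := by
  cases w <;> simp [onHead]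

/-- The indicator function of the empty word. -/
def emptyInd : Mould
  | [] => 1
  | _ :: _ => 0

theorem decon_emptyInd_mul (F : List ℚ → List ℚ → ℚ) (w : List ℚ) :
    decon (fun b c => emptyInd b * F b c) w = F [] w := by
  cases w with
  | nil => simp [decon_nil, emptyInd]
  | cons x w => simp [decon_cons, emptyInd, decon_zero]

/-- Deconcatenation is compatible with the shuffle product. -/
theorem shSum_decon (F : List ℚ → List ℚ → ℚ) (u v : List ℚ) :
    shSum (decon F) u v = decon (fun u₁ u₂ => decon (fun v₁ v₂ =>
      shSum (fun a => shSum (F a) u₂ v₂) u₁ v₁) v) u := by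
  induction u generalizing F v with
  | nil => simp [shSum_nil_left, decon_nil]
  | cons x u ihu =>
    induction v generalizing F with
    | nil => simp [shSum_nil_right, decon_nil]
    | cons y v ihv =>
      rw [shSum_cons_cons]
      simp only [decon_cons F, shSum_add]
      rw [ihu, ihv]
      simp only [decon_cons, shSum_cons_cons, shSum_nil_left, shSum_nil_right, decon_add]
      ring

/-- Shuffles decomposed by the origin of their first letter. -/
theorem shSum_onHead (H : ℚ → List ℚ → ℚ) (u v : List ℚ) :
    shSum (onHead H) u v = onHead (fun x u' => shSum (H x) u' v) u +
      onHead (fun y v' => shSum (H y) u v') v := by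
  cases u <;> cases v <;>
    simp [onHead, shSum_nil_left, shSum_nil_right, shSum_cons_cons]

/-- Shuffles decomposed around a marked letter of one of the factors. -/
theorem shSum_append_cons (f : Mould) (x : ℚ) (u₁ u₃ v : List ℚ) :
    shSum f (u₁ ++ x :: u₃) v = decon (fun v₁ v₃ =>
      shSum (fun a => shSum (fun c => f (a ++ x :: c)) u₃ v₃) u₁ v₁) v := by
  induction u₁ generalizing f v with
  | nil =>
    simp only [List.nil_append, shSum_nil_left]
    induction v generalizing f with
    | nil => simp [shSum_nil_right, decon_nil]
    | cons y v ihv => simp [shSum_cons_cons, decon_cons, ihv]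
  | cons z u ihu =>
    induction v generalizing f with
    | nil => simp [shSum_nil_right, decon_nil]
    | cons y v ihv =>
      rw [List.cons_append, shSum_cons_cons, ihu, ← List.cons_append, ihv]
      simp only [decon_cons, shSum_cons_cons, shSum_nil_right, decon_add, List.cons_append]
      ring

/-- Alternality of a mould on all words. -/
def Alternal (A : Mould) : Prop := ∀ u v : List ℚ, u ≠ [] → v ≠ [] → shSum A u v = 0

theorem Alternal.shSum_eq {B : Mould} (hB : Alternal B) (hB0 : B [] = 0) (u v : List ℚ) :
    shSum B u v = emptyInd v * B u + emptyInd u * B v := by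
  cases u with
  | nil => cases v <;> simp [shSum_nil_left, emptyInd, hB0]
  | cons x u =>
    cases v with
    | nil => simp [shSum_nil_right, emptyInd]
    | cons y v => simp [emptyInd, hB (x :: u) (y :: v)]

theorem Alternal.shSum_translate_eq {B : Mould} (hB : Alternal B) (hB0 : B [] = 0) (x : ℚ)
    (u v : List ℚ) :
    shSum (fun b => B (b.map (· - x))) u v =
      emptyInd v * B (u.map (· - x)) + emptyInd u * B (v.map (· - x)) := by
  rw [shSum_map, hB.shSum_eq hB0]
  cases u <;> cases v <;> simp [emptyInd]

theorem decon_mul_emptyInd (F : List ℚ → List ℚ → ℚ) (w : List ℚ) :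
    decon (fun b c => emptyInd c * F b c) w = F w [] := by
  induction w generalizing F with
  | nil => simp [decon_nil, emptyInd]
  | cons x w ih => rw [decon_cons, ih fun b c => F (x :: b) c]; simp [emptyInd]

theorem Alternal.luM {A B : Mould} (hA : Alternal A) (hB : Alternal B)
    (hA0 : A [] = 0) (hB0 : B [] = 0) : Alternal (luM A B) := by
  have key : ∀ {A B : Mould}, Alternal A → Alternal B → A [] = 0 → B [] = 0 →
      ∀ u v : List ℚ, u ≠ [] → v ≠ [] → shSum (muM A B) u v = A u * B v + A v * B u := by
    intro A B hA hB hA0 hB0 u v hu hv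
    have h : muM A B = decon fun a b => A a * B b := rfl
    have hexp : ∀ u₁ u₂ v₁ v₂, (emptyInd v₁ * A u₁ + emptyInd u₁ * A v₁) *
        (emptyInd v₂ * B u₂ + emptyInd u₂ * B v₂) =
        emptyInd v₁ * (emptyInd v₂ * (A u₁ * B u₂)) + emptyInd u₂ * (emptyInd v₁ * (A u₁ * B v₂)) +
        emptyInd u₁ * (emptyInd v₂ * (A v₁ * B u₂)) + emptyInd u₁ * (emptyInd u₂ * (A v₁ * B v₂)) :=
      fun _ _ _ _ => by ring
    rw [h, shSum_decon]
    simp only [shSum_mul_left, shSum_mul_right, hA.shSum_eq hA0, hB.shSum_eq hB0, hexp, decon_add,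
      decon_mul_left, decon_emptyInd_mul, decon_mul_emptyInd]
    obtain ⟨x, u, rfl⟩ := List.exists_cons_of_ne_nil hu
    obtain ⟨y, v, rfl⟩ := List.exists_cons_of_ne_nil hv
    simp [emptyInd]
  intro u v hu hv
  have : _root_.luM A B = fun w => muM A B w - muM B A w := rfl
  rw [this, shSum_sub, key hA hB hA0 hB0 u v hu hv, key hB hA hB0 hA0 u v hu hv]
  ring

/-- The part of `aritV` in which the translating letter follows the removed factor. -/
def aritRight (B A : Mould) : Mould :=
  decon fun a r => decon (fun b s => onHead (fun x c => A (a ++ x :: c) * B (b.map (· - x))) s) r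

/-- The part of `aritV` in which the translating letter precedes the removed factor. -/
def aritLeft (B A : Mould) : Mould :=
  decon fun a r => onHead (fun x s => decon (fun b c => A (a ++ x :: c) * B (b.map (· - x))) s) r

/-- The sum of `A` over the shuffles of `u₁ x u₃` and `v₁ v₃` in which `x` separates the letters of
`u₁` and `v₁` from those of `u₃` and `v₃`. -/
def shSumAround (A : Mould) (x : ℚ) (u₁ v₁ u₃ v₃ : List ℚ) : ℚ :=
  shSum (fun a => shSum (fun c => A (a ++ x :: c)) u₃ v₃) u₁ v₁

/-- The contribution to a shuffle of `u` and `v` of the terms where a factor of `v` is removed and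
translated by a letter of `u`. -/
def aritMixed (B A : Mould) (u v : List ℚ) : ℚ :=
  decon (fun u₁ u' => decon (fun v₁ v' => decon (fun v₂ v₃ => onHead (fun x u₃ =>
    shSumAround A x u₁ v₁ u₃ v₃ * B (v₂.map (· - x))) u') v') v) u

theorem Alternal.decon_shSumAround {A : Mould} (hA : Alternal A) (x : ℚ) (u₁ u₃ : List ℚ)
    {v : List ℚ} (hv : v ≠ []) :
    decon (fun v₁ v₃ => shSumAround A x u₁ v₁ u₃ v₃) v = 0 := by
  simp only [shSumAround, ← shSum_append_cons]
  exact hA _ v (by simp) hv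

theorem shSum_aritLeft {A B : Mould} (hA : Alternal A) (hB : Alternal B) (hB0 : B [] = 0)
    {u v : List ℚ} (hu : u ≠ []) (hv : v ≠ []) :
    shSum (aritLeft B A) u v = aritMixed B A u v + aritMixed B A v u := by
  have split : ∀ u₁ v₁ x s v', shSum (fun a => shSum (decon fun b c =>
      A (a ++ x :: c) * B (b.map (· - x))) s v') u₁ v₁ =
      decon (fun u₂ u₃ => B (u₂.map (· - x)) * shSumAround A x u₁ v₁ u₃ v') s +
      decon (fun v₂ v₃ => shSumAround A x u₁ v₁ s v₃ * B (v₂.map (· - x))) v' := by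
    intro u₁ v₁ x s v'
    have hexp : ∀ p q r t t', p * (q * t + r * t') = q * (t * p) + r * (p * t') :=
      fun (_ _ _ _ _ : ℚ) => by ring
    simp only [shSum_decon, shSum_decon_comm, shSum_mul_right, shSum_mul_left, shSum_add,
      hB.shSum_translate_eq hB0, shSumAround, hexp, decon_add, decon_mul_left,
      decon_emptyInd_mul]
  have key : ∀ u v : List ℚ, v ≠ [] →
      decon (fun u₁ u' => decon (fun v₁ v' => shSum (fun a => onHead (fun x s =>
        shSum (decon fun b c => A (a ++ x :: c) * B (b.map (· - x))) s v') u') u₁ v₁) v) u =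
      aritMixed B A u v := by
    intro u v hv
    have h : ∀ u₁ u', decon (fun v₁ v' => onHead (fun x s => decon (fun u₂ u₃ =>
        B (u₂.map (· - x)) * shSumAround A x u₁ v₁ u₃ v') s) u') v = 0 := by
      intro u₁ u'
      simp only [decon_onHead_comm, decon_comm _ v, decon_mul_left, hA.decon_shSumAround _ _ _ hv,
        mul_zero, decon_zero, onHead_zero]
    simp only [shSum_onHead_comm, split, onHead_add, decon_add, h, zero_add, aritMixed,
      decon_onHead_comm]
  rw [aritLeft, shSum_decon]
  simp only [shSum_onHead, shSum_add, decon_add]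
  rw [key u v hv, ← key v u hu, decon_comm _ v u]
  congr 2; funext u₁ u'
  congr 1; funext v₁ v'
  rw [shSum_comm]
  simp only [shSum_comm _ u']

theorem shSum_aritRight {A B : Mould} (hA : Alternal A) (hB : Alternal B) (hB0 : B [] = 0)
    {u v : List ℚ} (hu : u ≠ []) (hv : v ≠ []) :
    shSum (aritRight B A) u v = aritMixed B A u v + aritMixed B A v u := by
  have split : ∀ u₁ v₁ u' v', decon (fun u₂ r => decon (fun v₂ s => shSum (fun a => shSum (fun b =>
      onHead (fun x u₃ => shSum (fun c => A (a ++ x :: c) * B (b.map (· - x))) u₃ s) r)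
        u₂ v₂) u₁ v₁) v') u' =
      decon (fun u₂ r => onHead (fun x u₃ =>
        B (u₂.map (· - x)) * shSumAround A x u₁ v₁ u₃ v') r) u' +
      decon (fun v₂ v₃ => onHead (fun x u₃ =>
        shSumAround A x u₁ v₁ u₃ v₃ * B (v₂.map (· - x))) u') v' := by
    intro u₁ v₁ u' v'
    have hexp : ∀ p q r t t', p * (q * t + r * t') = q * (t * p) + r * (p * t') :=
      fun (_ _ _ _ _ : ℚ) => by ring
    simp only [shSum_onHead_comm, shSum_mul_right, shSum_mul_left, hB.shSum_translate_eq hB0,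
      shSumAround, hexp, onHead_add, onHead_mul_left, shSum_add, decon_add, decon_mul_left,
      decon_emptyInd_mul]
  have key : ∀ u v : List ℚ, v ≠ [] →
      decon (fun u₁ u' => decon (fun v₁ v' => decon (fun u₂ r => decon (fun v₂ s =>
        shSum (fun a => shSum (fun b => onHead (fun x u₃ =>
          shSum (fun c => A (a ++ x :: c) * B (b.map (· - x))) u₃ s) r) u₂ v₂) u₁ v₁) v') u') v) u =
      aritMixed B A u v := by
    intro u v hv
    have h : ∀ u₁ u', decon (fun v₁ v' => decon (fun u₂ r => onHead (fun x u₃ =>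
        B (u₂.map (· - x)) * shSumAround A x u₁ v₁ u₃ v') r) u') v = 0 := by
      intro u₁ u'
      simp only [decon_onHead_comm, decon_comm _ v, decon_mul_left, hA.decon_shSumAround _ _ _ hv,
        mul_zero, decon_zero, onHead_zero]
    simp only [split, decon_add, h, zero_add, aritMixed]
  rw [aritRight, shSum_decon]
  simp only [shSum_decon, shSum_decon_comm, shSum_onHead, shSum_add, decon_add]
  rw [key u v hv, ← key v u hu, decon_comm _ v u]
  congr 2; funext u₁ u'
  congr 1; funext v₁ v'
  rw [decon_comm]
  congr 1; funext v₂ s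
  congr 1; funext u₂ r
  rw [shSum_comm]
  congr 1; funext a
  rw [shSum_comm]
  simp only [shSum_comm _ r]

theorem sum_range_sub_eq_sum_ite (n : ℕ) (f : ℕ → ℚ) {k : ℕ} (hk : k ≤ n) :
    ∑ m ∈ Finset.range (n - k + 1), f (k + m) =
      ∑ l ∈ Finset.range (n + 1), if k ≤ l then f l else 0 := by
  conv_rhs => rw [show n + 1 = k + (n - k + 1) by omega, Finset.sum_range_add]
  rw [Finset.sum_eq_zero (s := Finset.range k)]
  · simp
  · intro l hl
    simp [Finset.mem_range.1 hl]

theorem onHead_drop (H : ℚ → List ℚ → ℚ) (w : List ℚ) (l : ℕ) :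
    onHead H (w.drop l) = if l < w.length then H (w.getD l 0) (w.drop (l + 1)) else 0 := by
  split_ifs with h
  · rw [List.drop_eq_getElem_cons h, List.getD_eq_getElem _ _ h]
    rfl
  · rw [List.drop_eq_nil_of_le (by omega)]
    rfl

theorem getD_cons_drop {w : List ℚ} {l : ℕ} (h : l < w.length) :
    w.getD l 0 :: w.drop (l + 1) = w.drop l := by
  rw [List.drop_eq_getElem_cons h, List.getD_eq_getElem _ _ h]

theorem aritRight_apply {A B : Mould} (hB0 : B [] = 0) (w : List ℚ) :
    aritRight B A w = ∑ k ∈ Finset.range (w.length + 1), ∑ l ∈ Finset.range (w.length + 1),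
      if k < l ∧ l < w.length then
        A (w.take k ++ w.drop l) * B (((w.take l).drop k).map (fun x => x - w.getD l 0))
      else 0 := by
  rw [aritRight, decon]
  refine Finset.sum_congr rfl fun k hk => ?_
  have hk : k ≤ w.length := by simpa [Nat.lt_succ_iff] using hk
  have := sum_range_sub_eq_sum_ite w.length (fun l => if k < l ∧ l < w.length then
        A (w.take k ++ w.drop l) * B (((w.take l).drop k).map (fun x => x - w.getD l 0))
      else 0) hk
  rw [decon, List.length_drop]
  refine Eq.trans (Finset.sum_congr rfl fun m _ => ?_) (this.trans ?_)
  · rw [List.drop_drop, onHead_drop, List.drop_take, Nat.add_sub_cancel_left]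
    rcases Nat.eq_zero_or_pos m with rfl | hm
    · simp [hB0]
    · by_cases h : k + m < w.length
      · simp only [h, hm, getD_cons_drop h, if_true, lt_add_iff_pos_right, and_self]
      · simp [h]
  · refine Finset.sum_congr rfl fun l _ => ?_
    split_ifs <;> first | rfl | omega

theorem aritLeft_apply {A B : Mould} (hB0 : B [] = 0) (w : List ℚ) :
    aritLeft B A w = ∑ k ∈ Finset.range (w.length + 1), ∑ l ∈ Finset.range (w.length + 1),
      if 1 ≤ k ∧ k < l ∧ l ≤ w.length then
        A (w.take k ++ w.drop l) * B (((w.take l).drop k).map (fun x => x - w.getD (k - 1) 0))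
      else 0 := by
  rw [aritLeft, decon, Finset.sum_range_succ, Finset.sum_range_succ' _ w.length]
  have h0 : ∀ H, onHead H (w.drop w.length) = 0 := fun H => by simp [onHead]
  have h1 : ¬ 1 ≤ 0 := by omega
  simp only [h0, add_zero, h1, false_and, if_false, Finset.sum_const_zero]
  refine Finset.sum_congr rfl fun k hk => ?_
  have hk : k < w.length := Finset.mem_range.1 hk
  have := sum_range_sub_eq_sum_ite w.length (fun l => if 1 ≤ k + 1 ∧ k + 1 < l ∧ l ≤ w.length then
      A (w.take (k + 1) ++ w.drop l) *
        B (((w.take l).drop (k + 1)).map (fun x => x - w.getD (k + 1 - 1) 0))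
      else 0) hk
  rw [onHead_drop, if_pos hk, decon, List.length_drop]
  refine Eq.trans (Finset.sum_congr rfl fun m hm => ?_) (this.trans ?_)
  · have hm : m < w.length - (k + 1) + 1 := Finset.mem_range.1 hm
    rw [List.drop_drop, List.drop_take, Nat.add_sub_cancel_left, Nat.add_sub_cancel]
    rcases Nat.eq_zero_or_pos m with rfl | hm'
    · simp [hB0]
    · rw [if_pos (by omega), List.getD_eq_getElem _ _ hk, ← List.take_concat_get' _ _ hk,
        List.append_assoc, List.singleton_append]
  · refine Finset.sum_congr rfl fun l _ => ?_
    split_ifs <;> first | rfl | omega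

theorem aritV_eq_sub {A B : Mould} (hB0 : B [] = 0) :
    aritV B A = fun w => aritRight B A w - aritLeft B A w := by
  funext w
  rw [aritRight_apply hB0, aritLeft_apply hB0, aritV]

theorem Alternal.aritV {A B : Mould} (hA : Alternal A) (hB : Alternal B) (hB0 : B [] = 0) :
    Alternal (aritV B A) := by
  intro u v hu hv
  rw [aritV_eq_sub hB0, shSum_sub, shSum_aritRight hA hB hB0 hu hv,
    shSum_aritLeft hA hB hB0 hu hv, sub_self]

theorem Alternal.ariV {A B : Mould} (hA : Alternal A) (hB : Alternal B)
    (hA0 : A [] = 0) (hB0 : B [] = 0) : Alternal (ariV A B) := by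
  intro u v hu hv
  have : _root_.ariV A B = fun w =>
      _root_.aritV B A w - _root_.aritV A B w + _root_.luM A B w := rfl
  rw [this, shSum_add, shSum_sub, hA.aritV hB hB0 u v hu hv, hB.aritV hA hA0 u v hu hv,
    hA.luM hB hA0 hB0 u v hu hv]
  simp

theorem GoodV.of_sublist {w w' : List ℚ} (hw : GoodV w) (h : w'.Sublist w) : GoodV w' :=
  ⟨hw.1.sublist h, fun h0 => hw.2 (h.subset h0)⟩

theorem GoodV.perm {w w' : List ℚ} (h : w.Perm w') : GoodV w ↔ GoodV w' := by
  rw [GoodV, GoodV, h.nodup_iff, h.mem_iff]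

theorem GoodV.take_append_drop {w : List ℚ} (hw : GoodV w) {k l : ℕ} (hkl : k ≤ l) :
    GoodV (w.take k ++ w.drop l) := by
  refine hw.of_sublist ?_
  conv_rhs => rw [← List.take_append_drop k w]
  exact (List.Sublist.refl _).append (List.drop_sublist_drop_left w hkl)

theorem GoodV.map_sub {b : List ℚ} (hb : b.Nodup) {x : ℚ} (hx : x ∉ b) :
    GoodV (b.map fun y => y - x) := by
  refine ⟨hb.map (sub_left_injective), fun h => hx ?_⟩
  obtain ⟨y, hy, hyx⟩ := List.mem_map.1 h
  rwa [← sub_eq_zero.1 hyx]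

theorem GoodV.map_sub_getD {w : List ℚ} (hw : GoodV w) {k l j : ℕ} (hj : j < w.length)
    (hkl : j < k ∨ l ≤ j) : GoodV (((w.take l).drop k).map fun y => y - w.getD j 0) := by
  refine GoodV.map_sub (hw.1.sublist ((List.drop_sublist _ _).trans (List.take_sublist _ _))) ?_
  rw [List.getD_eq_getElem _ _ hj, List.mem_iff_getElem]
  rintro ⟨i, hi, h⟩
  simp only [List.length_drop, List.length_take] at hi
  rw [List.getElem_drop, List.getElem_take, hw.1.getElem_inj_iff] at h
  omega

open Classical in
/-- The mould agreeing with `A` at generic points and vanishing elsewhere. -/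
noncomputable def restrictGood (A : Mould) : Mould := fun w => if GoodV w then A w else 0

theorem restrictGood_of_good (A : Mould) {w : List ℚ} (hw : GoodV w) : restrictGood A w = A w :=
  if_pos hw

theorem aritV_restrictGood (A B : Mould) {w : List ℚ} (hw : GoodV w) :
    aritV (restrictGood B) (restrictGood A) w = aritV B A w := by
  rw [aritV, aritV]
  congr 1 <;> refine Finset.sum_congr rfl fun k _ => Finset.sum_congr rfl fun l _ => ?_ <;>
    split_ifs with h
  · rw [restrictGood_of_good _ (hw.take_append_drop h.1.le),
      restrictGood_of_good _ (hw.map_sub_getD h.2 (Or.inr le_rfl))]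
  · rfl
  · rw [restrictGood_of_good _ (hw.take_append_drop h.2.1.le),
      restrictGood_of_good _ (hw.map_sub_getD (by omega) (Or.inl (by omega)))]
  · rfl

theorem muM_restrictGood (A B : Mould) {w : List ℚ} (hw : GoodV w) :
    muM (restrictGood A) (restrictGood B) w = muM A B w :=
  Finset.sum_congr rfl fun i _ => by
    rw [restrictGood_of_good _ (hw.of_sublist (List.take_sublist _ _)),
      restrictGood_of_good _ (hw.of_sublist (List.drop_sublist _ _))]

theorem ariV_restrictGood (A B : Mould) {w : List ℚ} (hw : GoodV w) :
    ariV (restrictGood A) (restrictGood B) w = ariV A B w := by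
  simp only [ariV, luM, aritV_restrictGood _ _ hw, muM_restrictGood _ _ hw]

theorem perm_append_of_mem_shuffles {u v w : List ℚ} (h : w ∈ shuffles u v) :
    w.Perm (u ++ v) := by
  induction u generalizing v w with
  | nil => simp_all [shuffles]
  | cons x u ihu =>
    induction v generalizing w with
    | nil => simp_all [shuffles]
    | cons y v ihv =>
      simp only [shuffles, List.mem_append, List.mem_map] at h
      obtain ⟨w, hw, rfl⟩ | ⟨w, hw, rfl⟩ := h
      · exact (ihu hw).cons x
      · exact ((ihv hw).cons y).trans List.perm_middle.symm

theorem shSum_congr_good {f g : Mould} (hfg : ∀ w, GoodV w → f w = g w) {u v : List ℚ}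
    (huv : GoodV (u ++ v)) : shSum f u v = shSum g u v := by
  rw [shSum, shSum, List.map_congr_left fun w hw =>
    hfg w ((GoodV.perm (perm_append_of_mem_shuffles hw)).2 huv)]

theorem alternal_restrictGood {A : Mould} (hA : ∀ w₁ w₂ : List ℚ, w₁ ≠ [] → w₂ ≠ [] →
    GoodV (w₁ ++ w₂) → ((shuffles w₁ w₂).map A).sum = 0) : Alternal (restrictGood A) := by
  intro u v hu hv
  by_cases huv : GoodV (u ++ v)
  · rw [shSum_congr_good (fun w hw => restrictGood_of_good A hw) huv]
    exact hA u v hu hv huv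
  · rw [shSum, List.map_congr_left (g := fun _ => (0 : ℚ)) fun w hw =>
      show restrictGood A w = 0 from
        if_neg (mt (GoodV.perm (perm_append_of_mem_shuffles hw)).1 huv)]
    simp

theorem ariV_alternal_on_good {M N : Mould} (hM0 : M [] = 0) (hN0 : N [] = 0)
    (hMal : ∀ w₁ w₂ : List ℚ, w₁ ≠ [] → w₂ ≠ [] → GoodV (w₁ ++ w₂) →
      ((shuffles w₁ w₂).map M).sum = 0)
    (hNal : ∀ w₁ w₂ : List ℚ, w₁ ≠ [] → w₂ ≠ [] → GoodV (w₁ ++ w₂) →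
      ((shuffles w₁ w₂).map N).sum = 0) (u v : List ℚ) (hu : u ≠ []) (hv : v ≠ [])
    (huv : GoodV (u ++ v)) : ((shuffles u v).map (ariV M N)).sum = 0 := by
  change shSum _ u v = 0
  rw [← shSum_congr_good (fun w hw => ariV_restrictGood M N hw) huv]
  exact (alternal_restrictGood hMal).ariV (alternal_restrictGood hNal) (by simp [restrictGood, hM0])
    (by simp [restrictGood, hN0]) u v hu hv

/-- Evaluation of a family of polynomials at a word over a commutative `ℚ`-algebra. -/
noncomputable def polyEval {S : Type} [CommRing S] [Algebra ℚ S]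
    (p : (r : ℕ) → MvPolynomial (Fin r) ℚ) (L : List S) : S :=
  MvPolynomial.aeval L.get (p L.length)

theorem polyEval_eq_aeval {S : Type} [CommRing S] [Algebra ℚ S]
    (p : (r : ℕ) → MvPolynomial (Fin r) ℚ) {L : List S} {n : ℕ} (h : L.length = n) :
    polyEval p L = MvPolynomial.aeval (fun i : Fin n => L.getD i 0) (p n) := by
  subst h
  rw [polyEval]
  congr 2
  funext i
  simp

theorem map_polyEval {S T : Type} [CommRing S] [Algebra ℚ S] [CommRing T] [Algebra ℚ T]
    (φ : S →ₐ[ℚ] T) (p : (r : ℕ) → MvPolynomial (Fin r) ℚ) (L : List S) :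
    φ (polyEval p L) = polyEval p (L.map φ) := by
  rw [polyEval_eq_aeval p (L := L.map φ) (L.length_map φ), polyEval,
    MvPolynomial.comp_aeval_apply]
  congr 2
  funext i
  simp

/-- The product of the differences of consecutive letters along `x, w, y`. -/
def pathProd (x : ℚ) : List ℚ → ℚ → ℚ
  | [], y => x - y
  | b :: w, y => (x - b) * pathProd b w y

theorem deltaV_eq_neg_pathProd {w : List ℚ} (hw : w ≠ []) : deltaV w = -pathProd 0 w 0 := by
  obtain ⟨b, w, rfl⟩ := List.exists_cons_of_ne_nil hw
  have h : ∀ b, pathProd b w 0 = (b :: w).getLastD 1 *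
      (List.zipWith (fun a b => a - b) (b :: w) w).prod := by
    clear hw b
    induction w with
    | nil => simp [pathProd]
    | cons c w ih => intro b; simp [pathProd, ih]; ring
  rw [pathProd, h, deltaV]
  simp
  ring

theorem pathProd_append_cons (x z y : ℚ) (u v : List ℚ) :
    pathProd x (u ++ z :: v) y = pathProd x u z * pathProd z v y := by
  induction u generalizing x with
  | nil => rfl
  | cons b u ih => simp [pathProd, ih, mul_assoc]

theorem pathProd_map_sub (x y t : ℚ) (w : List ℚ) :
    pathProd (x - t) (w.map (· - t)) (y - t) = pathProd x w y := by
  induction w generalizing x with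
  | nil => simp [pathProd]
  | cons b w ih => simp [pathProd, ih]

theorem pathProd_ne_zero {x y : ℚ} {w : List ℚ} (hx : (x :: w).Nodup) (hy : y ∉ w)
    (h : w = [] → x ≠ y) : pathProd x w y ≠ 0 := by
  induction w generalizing x with
  | nil => simpa [pathProd, sub_eq_zero] using h
  | cons b w ih =>
    simp only [List.nodup_cons, List.mem_cons, not_or] at hx hy
    refine mul_ne_zero (sub_ne_zero.2 hx.1.1) (ih (by simp [hx.2]) hy.2 fun _ => Ne.symm hy.1)

theorem GoodV.deltaV_ne_zero {w : List ℚ} (hw : GoodV w) : deltaV w ≠ 0 := by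
  by_cases h : w = []
  · simp [h, deltaV]
  · rw [deltaV_eq_neg_pathProd h, neg_ne_zero]
    exact pathProd_ne_zero (List.nodup_cons.2 ⟨hw.2, hw.1⟩) hw.2 (absurd · h)

theorem continuous_pathProd (w : List ℚ) : Continuous fun t : ℚ × ℚ => pathProd t.1 w t.2 := by
  induction w with
  | nil => exact continuous_fst.sub continuous_snd
  | cons b w ih =>
    exact (continuous_fst.sub continuous_const).mul
      (ih.comp (continuous_const.prodMk continuous_snd))

theorem continuous_evalP (p : (r : ℕ) → MvPolynomial (Fin r) ℚ) (u v : List ℚ) :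
    Continuous fun t : ℚ => evalP p (u ++ t :: v) := by
  have h : ∀ t : ℚ, evalP p (u ++ t :: v) = Polynomial.aeval t
      (polyEval p (u.map Polynomial.C ++ Polynomial.X :: v.map Polynomial.C)) := by
    intro t
    rw [map_polyEval]
    simp [Function.comp_def]
    rfl
  simp only [h]
  exact Polynomial.continuous_aeval _

open Filter Topology in
theorem tendsto_shSum_insert {B : Mould} {q : (r : ℕ) → MvPolynomial (Fin r) ℚ}
    (hrat : ∀ w : List ℚ, GoodV w → deltaV w * B w = evalP q w) {u v : List ℚ}
    (huv : GoodV (u ++ v)) (hu : u ≠ []) :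
    Tendsto (fun t => t * shSum (fun w => B (u ++ w)) [t] v) (𝓝[≠] 0)
      (𝓝 (evalP q (u ++ v ++ [0]) / deltaV (u ++ v))) := by
  have hgood : ∀ {u v : List ℚ}, GoodV (u ++ v) → ∀ᶠ t in 𝓝[≠] (0 : ℚ), GoodV (u ++ t :: v) := by
    intro u v huv
    have h : ∀ᶠ t in 𝓝 (0 : ℚ), t ∉ u ++ v :=
      (List.finite_toSet (u ++ v)).isClosed.isOpen_compl.mem_nhds huv.2
    filter_upwards [h.filter_mono nhdsWithin_le_nhds, self_mem_nhdsWithin] with t ht ht0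
    rw [GoodV.perm List.perm_middle]
    exact ⟨List.nodup_cons.2 ⟨ht, huv.1⟩, by
      rw [List.mem_cons, not_or]
      exact ⟨fun h => ht0 h.symm, huv.2⟩⟩
  have hB : ∀ {w : List ℚ}, GoodV w → B w = evalP q w / deltaV w := fun hw => by
    rw [eq_div_iff hw.deltaV_ne_zero, mul_comm, hrat _ hw]
  induction v generalizing u with
  | nil =>
    simp only [shSum_nil_right, List.append_nil] at huv ⊢
    have hne : pathProd 0 u 0 ≠ 0 := by
      have := huv.deltaV_ne_zero
      rwa [deltaV_eq_neg_pathProd hu, neg_ne_zero] at this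
    rw [deltaV_eq_neg_pathProd hu]
    have hc : Continuous fun t : ℚ => -pathProd 0 u t :=
      ((continuous_pathProd u).comp (continuous_const.prodMk continuous_id)).neg
    have := (((continuous_evalP q u []).tendsto 0).div (hc.tendsto 0)
      (neg_ne_zero.2 hne)).mono_left (nhdsWithin_le_nhds (s := {0}ᶜ))
    refine this.congr' ?_
    filter_upwards [hgood (v := []) (by simpa using huv), self_mem_nhdsWithin] with t ht ht0
    have ht0 : t ≠ 0 := ht0
    rw [hB ht, deltaV_eq_neg_pathProd (by simp), pathProd_append_cons, pathProd]
    simp only [Pi.div_apply]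
    rw [sub_zero, ← neg_mul, ← div_div, mul_div_cancel₀ _ ht0]
  | cons y v ih =>
    have hlim := ih (u := u ++ [y]) (by simpa using huv) (by simp)
    have hz : Tendsto (fun t => t * B (u ++ t :: y :: v)) (𝓝[≠] 0) (𝓝 0) := by
      have hne : -(pathProd 0 u 0 * pathProd 0 (y :: v) 0) ≠ 0 := by
        rw [neg_ne_zero]
        have h₁ := huv.of_sublist (List.sublist_append_left u _)
        have h₂ := huv.of_sublist (List.sublist_append_right u _)
        exact mul_ne_zero
          (pathProd_ne_zero (List.nodup_cons.2 ⟨h₁.2, h₁.1⟩) h₁.2 (absurd · hu))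
          (pathProd_ne_zero (List.nodup_cons.2 ⟨h₂.2, h₂.1⟩) h₂.2 (by simp))
      have hc : Continuous fun t : ℚ => -(pathProd 0 u t * pathProd t (y :: v) 0) :=
        (((continuous_pathProd u).comp (continuous_const.prodMk continuous_id)).mul
          ((continuous_pathProd (y :: v)).comp (continuous_id.prodMk continuous_const))).neg
      have := ((tendsto_id (α := ℚ) (x := 𝓝 0)).mul
        (((continuous_evalP q u (y :: v)).tendsto 0).div (hc.tendsto 0) hne)).mono_left
          (nhdsWithin_le_nhds (s := {0}ᶜ))
      rw [zero_mul] at this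
      refine this.congr' ?_
      filter_upwards [hgood huv] with t ht
      rw [hB ht, deltaV_eq_neg_pathProd (by simp), pathProd_append_cons]
      rfl
    have hsum := hz.add hlim
    simp only [List.append_assoc, List.cons_append, List.nil_append, zero_add] at hsum
    refine Tendsto.congr (fun t => ?_) (by simpa using hsum)
    rw [shSum_cons_cons, shSum_nil_left, mul_add]

open Filter Topology in
theorem evalP_zero_cons_of_good {B : Mould} {q : (r : ℕ) → MvPolynomial (Fin r) ℚ}
    (hrat : ∀ w : List ℚ, GoodV w → deltaV w * B w = evalP q w)
    (hal : ∀ w₁ w₂ : List ℚ, w₁ ≠ [] → w₂ ≠ [] → GoodV (w₁ ++ w₂) →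
      ((shuffles w₁ w₂).map B).sum = 0) {w : List ℚ} (hw : GoodV w) :
    evalP q (0 :: w) = evalP q (w ++ [0]) := by
  cases w with
  | nil => rfl
  | cons x w =>
    have hlim := tendsto_shSum_insert hrat (u := [x]) (v := w) hw (by simp)
    have hgood : ∀ᶠ t in 𝓝[≠] (0 : ℚ), GoodV (t :: x :: w) := by
      have h : ∀ᶠ t in 𝓝 (0 : ℚ), t ∉ x :: w :=
        (List.finite_toSet (x :: w)).isClosed.isOpen_compl.mem_nhds hw.2
      filter_upwards [h.filter_mono nhdsWithin_le_nhds, self_mem_nhdsWithin] with t ht ht0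
      exact ⟨List.nodup_cons.2 ⟨ht, hw.1⟩, by
        rw [List.mem_cons, not_or]
        exact ⟨fun h => ht0 h.symm, hw.2⟩⟩
    have hne : pathProd 0 (x :: w) 0 ≠ 0 :=
      pathProd_ne_zero (List.nodup_cons.2 ⟨hw.2, hw.1⟩) hw.2 (by simp)
    have hc : Continuous fun t : ℚ => -pathProd t (x :: w) 0 :=
      ((continuous_pathProd (x :: w)).comp (continuous_id.prodMk continuous_const)).neg
    have hlim' := (((continuous_evalP q [] (x :: w)).tendsto 0).div (hc.tendsto 0)
      (neg_ne_zero.2 hne)).mono_left (nhdsWithin_le_nhds (s := {0}ᶜ))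
    have heq := tendsto_nhds_unique (hlim'.congr' ?_) hlim
    · rw [← deltaV_eq_neg_pathProd (by simp)] at heq
      exact (div_left_inj' hw.deltaV_ne_zero).1 heq
    · filter_upwards [hgood, self_mem_nhdsWithin] with t ht ht0
      have ht0 : t ≠ 0 := ht0
      have h0 : shSum B [t] (x :: w) = 0 := hal [t] (x :: w) (by simp) (by simp) ht
      rw [shSum_cons_cons, shSum_nil_left, add_comm] at h0
      have hδ := hrat _ ht
      rw [deltaV_eq_neg_pathProd (by simp), pathProd] at hδ
      have hne' : pathProd t (x :: w) 0 ≠ 0 :=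
        pathProd_ne_zero ht.1 hw.2 (by simp)
      have : shSum (fun w => B ([x] ++ w)) [t] w = -B (t :: x :: w) := eq_neg_of_add_eq_zero_left h0
      simp only [Pi.div_apply, List.nil_append, this]
      rw [div_eq_iff (neg_ne_zero.2 hne'), ← hδ]
      ring

/-- The word of the variables of the polynomial ring in `r` variables. -/
noncomputable def genericWord (r : ℕ) : List (MvPolynomial (Fin r) ℚ) :=
  List.ofFn MvPolynomial.X

/-- Evaluation of polynomials in `r` variables at the first `r` letters of a word. -/
noncomputable def evalWord {S : Type} [CommRing S] [Algebra ℚ S] (r : ℕ) (w : List S) :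
    MvPolynomial (Fin r) ℚ →ₐ[ℚ] S :=
  MvPolynomial.aeval fun i => w.getD i 0

theorem map_genericWord {S : Type} [CommRing S] [Algebra ℚ S] {r : ℕ} {w : List S}
    (hw : w.length = r) : (genericWord r).map (evalWord r w) = w := by
  subst hw
  apply List.ext_getElem <;> simp [genericWord, evalWord]

theorem length_genericWord (r : ℕ) : (genericWord r).length = r := by simp [genericWord]

theorem polyEval_zero_cons {B : Mould} {q : (r : ℕ) → MvPolynomial (Fin r) ℚ}
    (hrat : ∀ w : List ℚ, GoodV w → deltaV w * B w = evalP q w)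
    (hal : ∀ w₁ w₂ : List ℚ, w₁ ≠ [] → w₂ ≠ [] → GoodV (w₁ ++ w₂) →
      ((shuffles w₁ w₂).map B).sum = 0) {S : Type} [CommRing S] [Algebra ℚ S] (m : List S) :
    polyEval q (0 :: m) = polyEval q (m ++ [0]) := by
  suffices h : ∀ n, polyEval q (0 :: genericWord n) = polyEval q (genericWord n ++ [0]) by
    have := congrArg (evalWord m.length m) (h m.length)
    simpa only [map_polyEval, List.map_cons, List.map_append, map_genericWord rfl, map_zero,
      List.map_nil] using this
  intro n
  let D : MvPolynomial (Fin n) ℚ := (∏ i, MvPolynomial.X i) *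
    ∏ i, ∏ j, if i = j then 1 else MvPolynomial.X i - MvPolynomial.X j
  have hD : D ≠ 0 := by
    refine mul_ne_zero (Finset.prod_ne_zero_iff.2 fun i _ => MvPolynomial.X_ne_zero i)
      (Finset.prod_ne_zero_iff.2 fun i _ => Finset.prod_ne_zero_iff.2 fun j _ => ?_)
    split_ifs with hij
    · exact one_ne_zero
    · exact sub_ne_zero.2 fun h => hij (MvPolynomial.X_injective h)
  rw [← sub_eq_zero]
  refine (mul_eq_zero.1 ?_).resolve_left hD
  refine MvPolynomial.funext fun x => ?_
  rw [map_mul, map_zero]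
  by_cases hx : GoodV (List.ofFn x)
  · have hev : ∀ P : MvPolynomial (Fin n) ℚ,
        MvPolynomial.eval x P = evalWord n (List.ofFn x) P := by
      intro P
      rw [evalWord, MvPolynomial.aeval_eq_eval]
      congr 2
      funext i
      simp
    have := evalP_zero_cons_of_good hrat hal hx
    rw [hev (_ - _), map_sub, map_polyEval, map_polyEval, List.map_cons, List.map_append,
      map_genericWord (by simp), map_zero, List.map_singleton, map_zero]
    rw [show polyEval q (0 :: List.ofFn x) = polyEval q (List.ofFn x ++ [0]) from this, sub_self,
      mul_zero]
  · refine mul_eq_zero_of_left ?_ _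
    simp only [D, map_mul, map_prod, mul_eq_zero, Finset.prod_eq_zero_iff]
    by_contra hne
    push Not at hne
    refine hx ⟨List.nodup_ofFn.2 fun i j hij => ?_, fun h0 => ?_⟩
    · by_contra h
      simpa [h, hij] using hne.2 i (by simp) j (by simp)
    · obtain ⟨i, hi⟩ := (List.mem_ofFn' _ _).1 h0
      simpa [hi] using hne.1 i (by simp)

/-- A function agrees with a polynomial at all generic words of length `r`. -/
def IsPolyOn (r : ℕ) (f : List ℚ → ℚ) : Prop :=
  ∃ P : MvPolynomial (Fin r) ℚ, ∀ w : List ℚ, w.length = r → GoodV w → f w = evalWord r w P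

namespace IsPolyOn

variable {r : ℕ} {f g : List ℚ → ℚ}

theorem congr (hg : IsPolyOn r g) (h : ∀ w : List ℚ, w.length = r → GoodV w → f w = g w) :
    IsPolyOn r f := by
  obtain ⟨P, hP⟩ := hg
  exact ⟨P, fun w hw hgood => (h w hw hgood).trans (hP w hw hgood)⟩

theorem zero : IsPolyOn r fun _ => 0 := ⟨0, fun _ _ _ => (map_zero _).symm⟩

theorem add (hf : IsPolyOn r f) (hg : IsPolyOn r g) : IsPolyOn r fun w => f w + g w := by
  obtain ⟨P, hP⟩ := hf
  obtain ⟨Q, hQ⟩ := hg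
  exact ⟨P + Q, fun w hw h => by dsimp only; rw [hP w hw h, hQ w hw h, map_add]⟩

theorem mul (hf : IsPolyOn r f) (hg : IsPolyOn r g) : IsPolyOn r fun w => f w * g w := by
  obtain ⟨P, hP⟩ := hf
  obtain ⟨Q, hQ⟩ := hg
  exact ⟨P * Q, fun w hw h => by dsimp only; rw [hP w hw h, hQ w hw h, map_mul]⟩

theorem neg (hf : IsPolyOn r f) : IsPolyOn r fun w => -f w := by
  obtain ⟨P, hP⟩ := hf
  exact ⟨-P, fun w hw h => by dsimp only; rw [hP w hw h, map_neg]⟩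

theorem sub (hf : IsPolyOn r f) (hg : IsPolyOn r g) : IsPolyOn r fun w => f w - g w := by
  simpa only [sub_eq_add_neg] using hf.add hg.neg

theorem sum {ι : Type*} (s : Finset ι) {F : ι → List ℚ → ℚ} (hF : ∀ i ∈ s, IsPolyOn r (F i)) :
    IsPolyOn r fun w => ∑ i ∈ s, F i w := by
  classical
  induction s using Finset.induction_on with
  | empty => simpa using zero
  | insert i s hi ih =>
    simp only [Finset.sum_insert hi]
    exact (hF i (by simp)).add (ih fun j hj => hF j (by simp [hj]))

theorem ite {c : Prop} [Decidable c] (hf : c → IsPolyOn r f) :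
    IsPolyOn r fun w => if c then f w else 0 := by
  by_cases h : c
  · simpa [h] using hf h
  · simpa [h] using zero

theorem of_dvd {P d : MvPolynomial (Fin r) ℚ} (h : d ∣ P)
    (hd : ∀ w : List ℚ, w.length = r → GoodV w → evalWord r w d ≠ 0) :
    IsPolyOn r fun w => evalWord r w P / evalWord r w d := by
  obtain ⟨Q, rfl⟩ := h
  exact ⟨Q, fun w hw hgood => by dsimp only; rw [map_mul, mul_div_cancel_left₀ _ (hd w hw hgood)]⟩

end IsPolyOn

theorem dvd_of_quotient_map_eq {R : Type} [CommRing R] [Algebra ℚ R] {d P Q : R}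
    (h : Ideal.Quotient.mkₐ ℚ (Ideal.span {d}) P = Ideal.Quotient.mkₐ ℚ (Ideal.span {d}) Q) :
    d ∣ P - Q := by
  rw [← Ideal.mem_span_singleton, ← Ideal.Quotient.eq]
  exact h

/-- The `i`-th letter of a word, counted from `1`, with value `0` outside the word. -/
def letter {S : Type} [Zero S] (w : List S) (i : ℕ) : S := (0 :: w).getD i 0

/-- The word with the letters of positions `k + 1, …, l` removed. -/
def remove {S : Type} (w : List S) (k l : ℕ) : List S := w.take k ++ w.drop l

/-- The factor of the letters of positions `k + 1, …, l`, translated by `x`. -/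
def factorSub {S : Type} [Sub S] (w : List S) (k l : ℕ) (x : S) : List S :=
  ((w.take l).drop k).map (· - x)

section Letters

variable {S T : Type} [CommRing S] [CommRing T]

theorem letter_zero (w : List S) : letter w 0 = 0 := rfl

theorem letter_succ (w : List S) (i : ℕ) : letter w (i + 1) = w.getD i 0 := rfl

theorem letter_length_succ (w : List S) : letter w (w.length + 1) = 0 := by
  simp [letter]

theorem factorSub_zero (w : List S) (k l : ℕ) : factorSub w k l 0 = (w.take l).drop k := by
  simp [factorSub]

theorem take_succ_eq_append_letter {w : List S} {k : ℕ} (hk : k < w.length) :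
    w.take (k + 1) = w.take k ++ [letter w (k + 1)] := by
  rw [letter_succ, List.getD_eq_getElem _ _ hk, List.take_concat_get' _ _ hk]

theorem drop_eq_letter_cons {w : List S} {l : ℕ} (hl : l < w.length) :
    w.drop l = letter w (l + 1) :: w.drop (l + 1) := by
  rw [letter_succ, List.getD_eq_getElem _ _ hl, List.drop_eq_getElem_cons hl]

theorem remove_eq_of_letter_eq {w : List S} {k l : ℕ} (hkl : k < l) (hl : l < w.length)
    (h : letter w (k + 1) = letter w (l + 1)) : remove w k l = remove w (k + 1) (l + 1) := by
  rw [remove, remove, drop_eq_letter_cons hl, take_succ_eq_append_letter (hkl.trans hl), h]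
  simp

theorem factorSub_eq_cons {w : List S} {k l : ℕ} (hkl : k < l) (hl : l ≤ w.length) (x : S) :
    factorSub w k l x = (letter w (k + 1) - x) :: factorSub w (k + 1) l x := by
  have : k < (w.take l).length := by rw [List.length_take]; omega
  rw [factorSub, drop_eq_letter_cons this, List.map_cons, factorSub]
  congr 2
  simp [letter_succ, List.getD_eq_getElem?_getD, hkl]

theorem factorSub_succ_eq_append {w : List S} {k l : ℕ} (hkl : k ≤ l) (hl : l < w.length) (x : S) :
    factorSub w k (l + 1) x = factorSub w k l x ++ [letter w (l + 1) - x] := by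
  rw [factorSub, take_succ_eq_append_letter hl, List.drop_append_of_le_length, List.map_append,
    factorSub, List.map_singleton]
  rw [List.length_take]
  omega

variable [Algebra ℚ S] [Algebra ℚ T]

theorem map_letter (φ : S →ₐ[ℚ] T) (w : List S) (i : ℕ) :
    φ (letter w i) = letter (w.map φ) i := by
  cases i with
  | zero => simp [letter]
  | succ i => simp [letter, Option.getD_map, ← map_zero φ, -map_zero]

theorem map_remove (φ : S →ₐ[ℚ] T) (w : List S) (k l : ℕ) :
    (remove w k l).map φ = remove (w.map φ) k l := by
  simp [remove]

theorem map_factorSub (φ : S →ₐ[ℚ] T) (w : List S) (k l : ℕ) (x : S) :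
    (factorSub w k l x).map φ = factorSub (w.map φ) k l (φ x) := by
  simp [factorSub, Function.comp_def]

theorem polyEval_factorSub_of_letter_eq {q : (r : ℕ) → MvPolynomial (Fin r) ℚ}
    (hq : ∀ {S : Type} [CommRing S] [Algebra ℚ S] (m : List S),
      polyEval q (0 :: m) = polyEval q (m ++ [0])) {w : List S} {k l : ℕ} (hkl : k < l)
    (hl : l < w.length) (h : letter w (k + 1) = letter w (l + 1)) :
    polyEval q (factorSub w k l (letter w (l + 1))) =
      polyEval q (factorSub w (k + 1) (l + 1) (letter w (k + 1))) := by
  rw [factorSub_eq_cons hkl hl.le, factorSub_succ_eq_append hkl hl, h, sub_self, hq]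

end Letters

theorem GoodV.letter_ne {w : List ℚ} (hw : GoodV w) {i j : ℕ} (hij : i < j)
    (hj : j ≤ w.length + 1) (h : 1 ≤ i ∨ j ≤ w.length) : letter w i ≠ letter w j := by
  have hz : ∀ {i}, 1 ≤ i → i ≤ w.length → letter w i ≠ 0 := by
    intro i hi hiw h0
    obtain ⟨i, rfl⟩ := Nat.exists_eq_add_of_le' hi
    rw [letter_succ, List.getD_eq_getElem _ _ hiw] at h0
    exact hw.2 (h0 ▸ List.getElem_mem _)
  rcases Nat.eq_zero_or_pos i with rfl | hi
  · exact (hz hij (by omega)).symm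
  · rcases Nat.lt_or_ge w.length j with hjw | hjw
    · obtain rfl : j = w.length + 1 := by omega
      rw [letter_length_succ]
      exact hz hi (by omega)
    · obtain ⟨i, rfl⟩ := Nat.exists_eq_add_of_le' hi
      obtain ⟨j, rfl⟩ := Nat.exists_eq_add_of_le' (show 1 ≤ j by omega)
      rw [letter_succ, letter_succ, List.getD_eq_getElem _ _ (by omega),
        List.getD_eq_getElem _ _ (by omega), Ne, hw.1.getElem_inj_iff]
      omega

theorem isPolyOn_polyEval_remove (r : ℕ) (p : (r : ℕ) → MvPolynomial (Fin r) ℚ) (k l : ℕ) :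
    IsPolyOn r fun w => polyEval p (remove w k l) :=
  ⟨polyEval p (remove (genericWord r) k l), fun w hw _ => by
    rw [map_polyEval, map_remove, map_genericWord hw]⟩

theorem isPolyOn_factorSub_divided_difference (r : ℕ) (q : (r : ℕ) → MvPolynomial (Fin r) ℚ)
    (k l : ℕ) {i j : ℕ} (hij : i < j) (hj : j ≤ r + 1) (h : 1 ≤ i ∨ j ≤ r) :
    IsPolyOn r fun w => (polyEval q (factorSub w k l (letter w i)) -
      polyEval q (factorSub w k l (letter w j))) / (letter w i - letter w j) := by
  have hL : ∀ {w : List ℚ}, w.length = r → (genericWord r).map (evalWord r w) = w :=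
    fun hw => map_genericWord hw
  have hdvd : letter (genericWord r) i - letter (genericWord r) j ∣
      polyEval q (factorSub (genericWord r) k l (letter (genericWord r) i)) -
        polyEval q (factorSub (genericWord r) k l (letter (genericWord r) j)) := by
    apply dvd_of_quotient_map_eq
    rw [map_polyEval, map_polyEval, map_factorSub, map_factorSub]
    congr 2
    exact Ideal.Quotient.eq.2 (Ideal.mem_span_singleton_self _)
  refine (IsPolyOn.of_dvd hdvd fun w hw hgood => ?_).congr fun w hw hgood => ?_
  · rw [map_sub, map_letter, map_letter, hL hw, sub_ne_zero]
    exact hgood.letter_ne hij (by omega) (by omega)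
  · simp only [map_sub, map_polyEval, map_factorSub, map_letter, hL hw]

theorem isPolyOn_shifted_difference (r : ℕ) (p q : (r : ℕ) → MvPolynomial (Fin r) ℚ)
    (hq : ∀ {S : Type} [CommRing S] [Algebra ℚ S] (m : List S),
      polyEval q (0 :: m) = polyEval q (m ++ [0])) {k l : ℕ} (hkl : k < l) (hl : l < r) :
    IsPolyOn r fun w =>
      (polyEval p (remove w k l) * polyEval q (factorSub w k l (letter w (l + 1))) -
        polyEval p (remove w (k + 1) (l + 1)) *
          polyEval q (factorSub w (k + 1) (l + 1) (letter w (k + 1)))) /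
        (letter w (k + 1) - letter w (l + 1)) := by
  have hL : ∀ {w : List ℚ}, w.length = r → (genericWord r).map (evalWord r w) = w :=
    fun hw => map_genericWord hw
  have hdvd : letter (genericWord r) (k + 1) - letter (genericWord r) (l + 1) ∣
      polyEval p (remove (genericWord r) k l) *
          polyEval q (factorSub (genericWord r) k l (letter (genericWord r) (l + 1))) -
        polyEval p (remove (genericWord r) (k + 1) (l + 1)) *
          polyEval q (factorSub (genericWord r) (k + 1) (l + 1)
            (letter (genericWord r) (k + 1))) := by
    apply dvd_of_quotient_map_eq
    have h := Ideal.Quotient.eq.2 (Ideal.mem_span_singleton_self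
      (letter (genericWord r) (k + 1) - letter (genericWord r) (l + 1)))
    rw [← Ideal.Quotient.mkₐ_eq_mk ℚ, map_letter, map_letter] at h
    simp only [map_mul, map_polyEval, map_factorSub, map_remove, map_letter]
    have hlen : l < ((genericWord r).map (Ideal.Quotient.mkₐ ℚ (Ideal.span
        {letter (genericWord r) (k + 1) - letter (genericWord r) (l + 1)}))).length := by
      simpa [length_genericWord] using hl
    rw [remove_eq_of_letter_eq hkl hlen h, polyEval_factorSub_of_letter_eq hq hkl hlen h]
  refine (IsPolyOn.of_dvd hdvd fun w hw hgood => ?_).congr fun w hw hgood => ?_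
  · rw [map_sub, map_letter, map_letter, hL hw, sub_ne_zero]
    exact hgood.letter_ne (by omega) (by omega) (by omega)
  · simp only [map_sub, map_mul, map_polyEval, map_factorSub, map_remove, map_letter, hL hw]

theorem exists_pathProd_append_left (z : ℚ) (a : List ℚ) :
    ∃ α, ∀ c y, pathProd z (a ++ c) y = α * pathProd (a.getLastD z) c y := by
  induction a generalizing z with
  | nil => exact ⟨1, by simp⟩
  | cons b a ih =>
    obtain ⟨α, hα⟩ := ih b
    exact ⟨(z - b) * α, fun c y => by
      rw [List.cons_append, pathProd, hα, List.getLastD_cons, mul_assoc]⟩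

theorem exists_pathProd_append_right (c : List ℚ) (y : ℚ) :
    ∃ γ, ∀ x b, pathProd x (b ++ c) y = pathProd x b (c.headD y) * γ := by
  cases c with
  | nil => exact ⟨1, by simp⟩
  | cons z c => exact ⟨pathProd z c y, fun x b => pathProd_append_cons x z y b c⟩

theorem deltaV_map_sub {b : List ℚ} (hb : b ≠ []) (x : ℚ) :
    deltaV (b.map (· - x)) = -pathProd x b x := by
  rw [deltaV_eq_neg_pathProd (by simpa using hb), ← pathProd_map_sub x x x b, sub_self]

theorem exists_deltaV_append_append (a c : List ℚ) : ∃ η, ∀ b, a ++ b ++ c ≠ [] →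
    deltaV (a ++ b ++ c) = η * pathProd (a.getLastD 0) b (c.headD 0) := by
  obtain ⟨α, hα⟩ := exists_pathProd_append_left 0 a
  obtain ⟨γ, hγ⟩ := exists_pathProd_append_right c 0
  exact ⟨-(α * γ), fun b hb => by
    rw [deltaV_eq_neg_pathProd hb, List.append_assoc, hα, hγ]; ring⟩

theorem deltaV_append_ne_nil {a c : List ℚ} (h : a.getLastD 0 ≠ c.headD 0) : a ++ [] ++ c ≠ [] := by
  rintro h0
  simp only [List.append_nil, List.append_eq_nil_iff] at h0
  exact h (by rw [h0.1, h0.2]; rfl)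

theorem deltaV_mul_of_translate_right {a b c : List ℚ} {s t b₁ P Q : ℚ}
    (hac : a.getLastD 0 ≠ c.headD 0) (hb₁ : b₁ ≠ c.headD 0)
    (hs : deltaV (a ++ c) * s = P)
    (ht : deltaV ((b₁ :: b).map (· - c.headD 0)) * t = Q) :
    deltaV (a ++ b₁ :: b ++ c) * (s * t) =
      P * Q * (1 / (b₁ - c.headD 0) - 1 / (a.getLastD 0 - c.headD 0)) := by
  obtain ⟨η, hη⟩ := exists_deltaV_append_append a c
  have h := hη [] (deltaV_append_ne_nil hac)
  rw [List.append_nil] at h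
  rw [h, pathProd] at hs
  rw [deltaV_map_sub (by simp), pathProd] at ht
  rw [hη _ (by simp), pathProd, ← hs, ← ht]
  field_simp [sub_ne_zero.2 hac, sub_ne_zero.2 hb₁]
  ring

theorem deltaV_mul_of_translate_left {a b c : List ℚ} {s t P Q : ℚ} (hb : b ≠ [])
    (hac : a.getLastD 0 ≠ c.headD 0) (hbₘ : b.getLastD 0 ≠ a.getLastD 0)
    (hs : deltaV (a ++ c) * s = P)
    (ht : deltaV (b.map (· - a.getLastD 0)) * t = Q) :
    deltaV (a ++ b ++ c) * (s * t) =
      -(P * Q * (1 / (a.getLastD 0 - c.headD 0) + 1 / (b.getLastD 0 - a.getLastD 0))) := by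
  obtain ⟨η, hη⟩ := exists_deltaV_append_append a c
  obtain ⟨β, hβ⟩ : ∃ β, ∀ y, pathProd (a.getLastD 0) b y = β * (b.getLastD 0 - y) := by
    obtain ⟨β, hβ⟩ := exists_pathProd_append_left (a.getLastD 0) b
    refine ⟨β, fun y => ?_⟩
    have := hβ [] y
    obtain ⟨z, b, rfl⟩ := List.exists_cons_of_ne_nil hb
    simpa only [List.append_nil, List.getLastD_cons, pathProd] using this
  have h := hη [] (deltaV_append_ne_nil hac)
  rw [List.append_nil] at h
  rw [h, pathProd] at hs
  rw [deltaV_map_sub hb, hβ] at ht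
  rw [hη _ (by simp [hb]), hβ, ← hs, ← ht]
  field_simp [sub_ne_zero.2 hac, sub_ne_zero.2 hbₘ]
  ring

theorem getLastD_take {w : List ℚ} {k : ℕ} (hk : k ≤ w.length) :
    (w.take k).getLastD 0 = letter w k := by
  cases k with
  | zero => rfl
  | succ k => simp [take_succ_eq_append_letter hk]

theorem headD_drop (w : List ℚ) (l : ℕ) : (w.drop l).headD 0 = letter w (l + 1) := by
  simp [letter_succ, List.headD_eq_head?_getD]

theorem getLastD_drop_take {w : List ℚ} {k l : ℕ} (hkl : k < l) (hl : l ≤ w.length) :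
    ((w.take l).drop k).getLastD 0 = letter w l := by
  obtain ⟨l, rfl⟩ := Nat.exists_eq_add_of_le' (Nat.one_le_of_lt hkl)
  rw [take_succ_eq_append_letter hl, List.drop_append_of_le_length]
  · simp
  · rw [List.length_take]
    omega

theorem take_append_drop_take_append_drop (w : List ℚ) {k l : ℕ} (hkl : k ≤ l) :
    w.take k ++ (w.take l).drop k ++ w.drop l = w := by
  conv_rhs => rw [← List.take_append_drop l w, ← List.take_append_drop k (w.take l),
    List.take_take, min_eq_left hkl]

theorem GoodV.factorSub {w : List ℚ} (hw : GoodV w) {k l j : ℕ} (h : j ≤ k ∨ l < j) :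
    GoodV (factorSub w k l (letter w j)) := by
  have h0 : GoodV (_root_.factorSub w k l 0) := by
    rw [factorSub_zero]
    exact hw.of_sublist ((List.drop_sublist _ _).trans (List.take_sublist _ _))
  cases j with
  | zero => exact h0
  | succ j =>
    rcases Nat.lt_or_ge j w.length with hj | hj
    · exact hw.map_sub_getD hj (by omega)
    · rwa [letter_succ, List.getD_eq_default _ _ hj]

theorem deltaV_mul_aritV_right_term {A B : Mould} {p q : (r : ℕ) → MvPolynomial (Fin r) ℚ}
    (hA : ∀ w : List ℚ, GoodV w → deltaV w * A w = evalP p w)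
    (hB : ∀ w : List ℚ, GoodV w → deltaV w * B w = evalP q w)
    {w : List ℚ} (hw : GoodV w) {k l : ℕ}
    (hkl : k < l) (hl : l ≤ w.length) (h : 1 ≤ k ∨ l < w.length) :
    deltaV w * (A (remove w k l) * B (factorSub w k l (letter w (l + 1)))) =
      polyEval p (remove w k l) * polyEval q (factorSub w k l (letter w (l + 1))) *
        (1 / (letter w (k + 1) - letter w (l + 1)) - 1 / (letter w k - letter w (l + 1))) := by
  have hb : (w.take l).drop k = letter w (k + 1) :: (w.take l).drop (k + 1) := by
    rw [← factorSub_zero, ← factorSub_zero, factorSub_eq_cons hkl hl, sub_zero]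
  have hs := hA _ (hw.take_append_drop hkl.le)
  have ht := hB _ (hw.factorSub (k := k) (l := l) (j := l + 1) (by omega))
  have hac := hw.letter_ne (i := k) (j := l + 1) (by omega) (by omega) (by omega)
  have hb₁ := hw.letter_ne (i := k + 1) (j := l + 1) (by omega) (by omega) (by omega)
  rw [← getLastD_take (by omega), ← headD_drop] at hac
  rw [← headD_drop w l] at hb₁ ht
  rw [factorSub, hb] at ht
  have := deltaV_mul_of_translate_right hac hb₁ hs ht
  rw [← hb, take_append_drop_take_append_drop w hkl.le, headD_drop,
    getLastD_take (by omega)] at this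
  exact this

theorem deltaV_mul_aritV_left_term {A B : Mould} {p q : (r : ℕ) → MvPolynomial (Fin r) ℚ}
    (hA : ∀ w : List ℚ, GoodV w → deltaV w * A w = evalP p w)
    (hB : ∀ w : List ℚ, GoodV w → deltaV w * B w = evalP q w)
    {w : List ℚ} (hw : GoodV w) {k l : ℕ} (hk : 1 ≤ k) (hkl : k < l) (hl : l ≤ w.length) :
    deltaV w * (A (remove w k l) * B (factorSub w k l (letter w k))) =
      -(polyEval p (remove w k l) * polyEval q (factorSub w k l (letter w k)) *
        (1 / (letter w k - letter w (l + 1)) + 1 / (letter w l - letter w k))) := by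
  have hb : (w.take l).drop k ≠ [] := by
    rw [← List.length_pos_iff, List.length_drop, List.length_take]
    omega
  have hs := hA _ (hw.take_append_drop hkl.le)
  have ht := hB _ (hw.factorSub (k := k) (l := l) (j := k) (by omega))
  have hac := hw.letter_ne (i := k) (j := l + 1) (by omega) (by omega) (by omega)
  have hbₘ := (hw.letter_ne hkl (by omega) (by omega)).symm
  rw [← getLastD_take (by omega), ← headD_drop] at hac
  rw [← getLastD_drop_take hkl hl, ← getLastD_take (by omega : k ≤ w.length)] at hbₘ
  rw [← getLastD_take (by omega : k ≤ w.length)] at ht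
  have := deltaV_mul_of_translate_left hb hac hbₘ hs ht
  rw [take_append_drop_take_append_drop w hkl.le, headD_drop, getLastD_take (by omega),
    getLastD_drop_take hkl hl] at this
  exact this

theorem sum_pairs_rearrange (r : ℕ) (f₁ f₂ g₁ g₂ : ℕ → ℕ → ℚ) :
    (∑ k ∈ Finset.range (r + 1), ∑ l ∈ Finset.range (r + 1),
        if k < l ∧ l < r then f₁ k l - f₂ k l else 0) +
      (∑ k ∈ Finset.range (r + 1), ∑ l ∈ Finset.range (r + 1),
        if 1 ≤ k ∧ k < l ∧ l ≤ r then g₁ k l + g₂ k l else 0) =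
    (∑ k ∈ Finset.range r, ∑ l ∈ Finset.range r,
        if k < l then f₁ k l + g₂ (k + 1) (l + 1) else 0) +
      (∑ k ∈ Finset.range r, ∑ l ∈ Finset.range r,
        if 1 ≤ k ∧ k < l then g₁ k l - f₂ k l else 0) +
      ∑ k ∈ Finset.range r, if 1 ≤ k then g₁ k r - f₂ 0 k else 0 := by
  have hf : ∀ f : ℕ → ℕ → ℚ, (∑ k ∈ Finset.range (r + 1), ∑ l ∈ Finset.range (r + 1),
      if k < l ∧ l < r then f k l else 0) =
      ∑ k ∈ Finset.range r, ∑ l ∈ Finset.range r, if k < l then f k l else 0 := by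
    intro f
    rw [Finset.sum_range_succ, Finset.sum_eq_zero (s := Finset.range (r + 1)) (f := fun l => _),
      add_zero]
    · refine Finset.sum_congr rfl fun k _ => ?_
      rw [Finset.sum_range_succ, if_neg (by omega), add_zero]
      exact Finset.sum_congr rfl fun l hl => by simp [Finset.mem_range.1 hl]
    · exact fun l _ => if_neg (by omega)
  have hf₂ : (∑ k ∈ Finset.range r, ∑ l ∈ Finset.range r, if k < l then f₂ k l else 0) =
      (∑ k ∈ Finset.range r, ∑ l ∈ Finset.range r, if 1 ≤ k ∧ k < l then f₂ k l else 0) +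
        ∑ l ∈ Finset.range r, if 1 ≤ l then f₂ 0 l else 0 := by
    cases r with
    | zero => simp
    | succ r =>
      rw [Finset.sum_range_succ', Finset.sum_range_succ' (n := r) (fun k => ∑ l ∈ _, _)]
      simp [Nat.one_le_iff_ne_zero, Nat.pos_iff_ne_zero]
  have hg₁ : (∑ k ∈ Finset.range (r + 1), ∑ l ∈ Finset.range (r + 1),
      if 1 ≤ k ∧ k < l ∧ l ≤ r then g₁ k l else 0) =
      (∑ k ∈ Finset.range r, ∑ l ∈ Finset.range r, if 1 ≤ k ∧ k < l then g₁ k l else 0) +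
        ∑ k ∈ Finset.range r, if 1 ≤ k then g₁ k r else 0 := by
    rw [Finset.sum_range_succ, Finset.sum_eq_zero (s := Finset.range (r + 1)) (f := fun l => _),
      add_zero, ← Finset.sum_add_distrib]
    · refine Finset.sum_congr rfl fun k hk => ?_
      rw [Finset.sum_range_succ]
      congr 1
      · exact Finset.sum_congr rfl fun l hl => by simp [(Finset.mem_range.1 hl).le]
      · simp [Finset.mem_range.1 hk]
    · exact fun l _ => if_neg (by omega)
  have hg₂ : (∑ k ∈ Finset.range (r + 1), ∑ l ∈ Finset.range (r + 1),
      if 1 ≤ k ∧ k < l ∧ l ≤ r then g₂ k l else 0) =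
      ∑ k ∈ Finset.range r, ∑ l ∈ Finset.range r, if k < l then g₂ (k + 1) (l + 1) else 0 := by
    rw [Finset.sum_range_succ', Finset.sum_eq_zero (s := Finset.range (r + 1)) (f := fun l => _),
      add_zero]
    · refine Finset.sum_congr rfl fun k _ => ?_
      rw [Finset.sum_range_succ', if_neg (by omega), add_zero]
      exact Finset.sum_congr rfl fun l hl => by
        simp [Nat.succ_le_of_lt (Finset.mem_range.1 hl)]
    · exact fun l _ => if_neg (by omega)
  have hadd : ∀ (c : Prop) [Decidable c] (x y : ℚ),
      (if c then x + y else 0) = (if c then x else 0) + if c then y else 0 := by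
    intro c _ x y
    split_ifs <;> simp
  have hsub : ∀ (c : Prop) [Decidable c] (x y : ℚ),
      (if c then x - y else 0) = (if c then x else 0) - if c then y else 0 := by
    intro c _ x y
    split_ifs <;> simp
  simp only [hadd, hsub, Finset.sum_add_distrib, Finset.sum_sub_distrib, hf, hf₂, hg₁, hg₂]
  ring

/-- The common singular part of `arit` and `lu`, where `p` and `q` are the numerators. -/
noncomputable def cutSum (p q : (r : ℕ) → MvPolynomial (Fin r) ℚ) (w : List ℚ) : ℚ :=
  ∑ k ∈ Finset.range w.length, if 1 ≤ k then
    polyEval p (w.drop k) * polyEval q (w.take k) / letter w (k + 1) +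
      polyEval p (w.take k) * polyEval q (w.drop k) / letter w k
  else 0

theorem deltaV_mul_luM {A B : Mould} {p q : (r : ℕ) → MvPolynomial (Fin r) ℚ}
    (hA0 : A [] = 0) (hB0 : B [] = 0)
    (hA : ∀ w : List ℚ, GoodV w → deltaV w * A w = evalP p w)
    (hB : ∀ w : List ℚ, GoodV w → deltaV w * B w = evalP q w) {w : List ℚ} (hw : GoodV w) :
    deltaV w * luM A B w = cutSum q p w - cutSum p q w := by
  have hsplit : ∀ {A B : Mould} {p q : (r : ℕ) → MvPolynomial (Fin r) ℚ},
      (∀ w : List ℚ, GoodV w → deltaV w * A w = evalP p w) →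
      (∀ w : List ℚ, GoodV w → deltaV w * B w = evalP q w) → ∀ {k}, 1 ≤ k → k < w.length →
      deltaV w * (A (w.take k) * B (w.drop k)) = polyEval p (w.take k) * polyEval q (w.drop k) *
        (1 / letter w (k + 1) - 1 / letter w k) := by
    intro A B p q hA hB k hk hkw
    simpa [remove, letter_length_succ, factorSub_zero] using
      deltaV_mul_aritV_right_term hA hB hw hkw le_rfl (Or.inl hk)
  have hmu : ∀ {A B : Mould}, A [] = 0 → B [] = 0 → muM A B w =
      ∑ k ∈ Finset.range w.length, if 1 ≤ k then A (w.take k) * B (w.drop k) else 0 := by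
    intro A B hA0 hB0
    rw [muM, Finset.sum_range_succ, List.drop_length, hB0, mul_zero, add_zero]
    refine Finset.sum_congr rfl fun k _ => ?_
    rcases k with _ | k <;> simp [hA0]
  rw [luM, hmu hA0 hB0, hmu hB0 hA0, cutSum, cutSum, ← Finset.sum_sub_distrib,
    ← Finset.sum_sub_distrib, Finset.mul_sum]
  refine Finset.sum_congr rfl fun k hk => ?_
  split_ifs with h
  · rw [mul_sub, hsplit hA hB h (Finset.mem_range.1 hk), hsplit hB hA h (Finset.mem_range.1 hk)]
    ring
  · simp

theorem isPolyOn_deltaV_mul_aritV_sub_cutSum {A B : Mould}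
    {p q : (r : ℕ) → MvPolynomial (Fin r) ℚ}
    (hA : ∀ w : List ℚ, GoodV w → deltaV w * A w = evalP p w)
    (hB : ∀ w : List ℚ, GoodV w → deltaV w * B w = evalP q w)
    (hq : ∀ {S : Type} [CommRing S] [Algebra ℚ S] (m : List S),
      polyEval q (0 :: m) = polyEval q (m ++ [0])) (r : ℕ) :
    IsPolyOn r fun w => deltaV w * aritV B A w - cutSum p q w := by
  have hcut : ∀ k, 1 ≤ k → k < r → IsPolyOn r fun w =>
      polyEval p (remove w k r) *
        ((polyEval q (factorSub w k r (letter w k)) -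
          polyEval q (factorSub w k r (letter w (r + 1)))) / (letter w k - letter w (r + 1))) +
      polyEval p (remove w 0 k) *
        ((polyEval q (factorSub w 0 k (letter w 0)) -
          polyEval q (factorSub w 0 k (letter w (k + 1)))) / (letter w 0 - letter w (k + 1))) :=
    fun k hk hkr => ((isPolyOn_polyEval_remove r p k r).mul
      (isPolyOn_factorSub_divided_difference r q k r (by omega) le_rfl (Or.inl hk))).add
      ((isPolyOn_polyEval_remove r p 0 k).mul
      (isPolyOn_factorSub_divided_difference r q 0 k (by omega) (by omega) (Or.inr hkr)))
  refine IsPolyOn.congr (((IsPolyOn.sum (Finset.range r) fun k hk =>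
      IsPolyOn.sum (Finset.range r) fun l hl => IsPolyOn.ite fun hkl : k < l =>
        isPolyOn_shifted_difference r p q hq hkl (Finset.mem_range.1 hl)).add
    (IsPolyOn.sum (Finset.range r) fun k hk => IsPolyOn.sum (Finset.range r) fun l hl =>
      IsPolyOn.ite fun hkl : 1 ≤ k ∧ k < l => (isPolyOn_polyEval_remove r p k l).mul
        (isPolyOn_factorSub_divided_difference r q k l (i := k) (j := l + 1)
          (by omega) (by have := Finset.mem_range.1 hl; omega) (Or.inl hkl.1)))).add
    (IsPolyOn.sum (Finset.range r) fun k hk => IsPolyOn.ite fun h : 1 ≤ k =>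
      hcut k h (Finset.mem_range.1 hk))) fun w hwr hw => ?_
  subst hwr
  let U k l := polyEval p (remove w k l) * polyEval q (factorSub w k l (letter w (l + 1)))
  let W k l := polyEval p (remove w k l) * polyEval q (factorSub w k l (letter w k))
  have harit : deltaV w * aritV B A w =
      (∑ k ∈ Finset.range (w.length + 1), ∑ l ∈ Finset.range (w.length + 1),
        if k < l ∧ l < w.length then U k l / (letter w (k + 1) - letter w (l + 1)) -
          U k l / (letter w k - letter w (l + 1)) else 0) +
      (∑ k ∈ Finset.range (w.length + 1), ∑ l ∈ Finset.range (w.length + 1),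
        if 1 ≤ k ∧ k < l ∧ l ≤ w.length then W k l / (letter w k - letter w (l + 1)) +
          W k l / (letter w l - letter w k) else 0) := by
    rw [aritV, mul_sub, sub_eq_add_neg]
    simp only [Finset.mul_sum, ← Finset.sum_neg_distrib, mul_ite, mul_zero]
    congr 1 <;> refine Finset.sum_congr rfl fun k _ => Finset.sum_congr rfl fun l _ => ?_
    · split_ifs with h
      · have := deltaV_mul_aritV_right_term hA hB hw h.1 h.2.le (Or.inr h.2)
        refine this.trans ?_
        ring
      · rfl
    · split_ifs with h
      · have := deltaV_mul_aritV_left_term hA hB hw h.1 h.2.1 h.2.2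
        obtain ⟨k, rfl⟩ := Nat.exists_eq_add_of_le' h.1
        refine (congrArg Neg.neg this).trans ?_
        ring
      · simp
  rw [harit, sum_pairs_rearrange w.length
    (fun k l => U k l / (letter w (k + 1) - letter w (l + 1)))
    (fun k l => U k l / (letter w k - letter w (l + 1)))
    (fun k l => W k l / (letter w k - letter w (l + 1)))
    (fun k l => W k l / (letter w l - letter w k)), cutSum, add_sub_assoc,
    ← Finset.sum_sub_distrib]
  simp only [U, W]
  congr 1
  · congr 1 <;> refine Finset.sum_congr rfl fun k _ => Finset.sum_congr rfl fun l _ => ?_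
    · split_ifs with h
      · rw [← neg_sub (letter w (k + 1)) (letter w (l + 1)), div_neg, ← sub_eq_add_neg, sub_div]
      · rfl
    · split_ifs with h
      · ring
      · rfl
  · refine Finset.sum_congr rfl fun k _ => ?_
    split_ifs with h
    · simp only [letter_zero, letter_length_succ, factorSub_zero, remove, List.take_length,
        List.drop_length, List.append_nil, List.take_zero, List.nil_append, List.drop_zero,
        sub_zero, zero_sub, div_neg]
      ring
    · simp

theorem isPolyOn_deltaV_mul_ariV {A B : Mould} {p q : (r : ℕ) → MvPolynomial (Fin r) ℚ}
    (hA0 : A [] = 0) (hB0 : B [] = 0)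
    (hA : ∀ w : List ℚ, GoodV w → deltaV w * A w = evalP p w)
    (hB : ∀ w : List ℚ, GoodV w → deltaV w * B w = evalP q w)
    (hp : ∀ {S : Type} [CommRing S] [Algebra ℚ S] (m : List S),
      polyEval p (0 :: m) = polyEval p (m ++ [0]))
    (hq : ∀ {S : Type} [CommRing S] [Algebra ℚ S] (m : List S),
      polyEval q (0 :: m) = polyEval q (m ++ [0])) (r : ℕ) :
    IsPolyOn r fun w => deltaV w * ariV A B w :=
  ((isPolyOn_deltaV_mul_aritV_sub_cutSum hA hB hq r).sub
    (isPolyOn_deltaV_mul_aritV_sub_cutSum hB hA hp r)).congr fun w _ hw => by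
      rw [ariV, mul_add, mul_sub, deltaV_mul_luM hA0 hB0 hA hB hw]
      ring

/-- The space of alternal rational moulds M (in the v_i) such that Δ_v·M is polynomial-valued
in every depth is closed under the ari bracket. -/
theorem singular_bialternal_closed_under_ari (M N : Mould)
    (p q : (r : ℕ) → MvPolynomial (Fin r) ℚ)
    (hM0 : M [] = 0) (hN0 : N [] = 0)
    (hMrat : ∀ w : List ℚ, GoodV w → deltaV w * M w = evalP p w)
    (hNrat : ∀ w : List ℚ, GoodV w → deltaV w * N w = evalP q w)
    (hMal : ∀ w₁ w₂ : List ℚ, w₁ ≠ [] → w₂ ≠ [] → GoodV (w₁ ++ w₂) →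
      ((shuffles w₁ w₂).map M).sum = 0)
    (hNal : ∀ w₁ w₂ : List ℚ, w₁ ≠ [] → w₂ ≠ [] → GoodV (w₁ ++ w₂) →
      ((shuffles w₁ w₂).map N).sum = 0) :
    (∀ w₁ w₂ : List ℚ, w₁ ≠ [] → w₂ ≠ [] → GoodV (w₁ ++ w₂) →
      ((shuffles w₁ w₂).map (ariV M N)).sum = 0) ∧
    (∃ s : (r : ℕ) → MvPolynomial (Fin r) ℚ, ∀ w : List ℚ, GoodV w →
      deltaV w * ariV M N w = evalP s w) := by
  refine ⟨ariV_alternal_on_good hM0 hN0 hMal hNal, ?_⟩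
  choose s hs using isPolyOn_deltaV_mul_ariV hM0 hN0 hMrat hNrat
    (polyEval_zero_cons hMrat hMal) (polyEval_zero_cons hNrat hNal)
  exact ⟨s, fun w hw => (hs w.length w rfl hw).trans (polyEval_eq_aeval s rfl).symm⟩
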